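/- Let n ≥ 1 and let φ be a smooth function on ℝ^n supported in the closed unit ball with ∫φ = 1. There is a constant C = C(n,φ) such that for every j ∈ ℤ^n with |j| > 2 and every measurable function a on ℝ^n with |a| ≤ 1 almost everywhere, ∫ a dx = 0, and a supported in Q_0 ∪ Q_j, one has ‖𝓜_φ a‖_{L^1(ℝ^n)} ≤ C (1 + ln|j|). -/

import Mathlib

open MeasureTheory Real Set Metric ENNReal

noncomputable section

/-- `ℝ^n` with the Euclidean norm. -/
abbrev En (n : ℕ) := EuclideanSpace ℝ (Fin n)

/-- `ln₊ t = max (ln t) 0`. -/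
def lnp (t : ℝ) : ℝ := max (Real.log t) 0

/-- The unit cube `Q = (-1/2, 1/2)^n`. -/
def unitQ (n : ℕ) : Set (En n) := {x | ∀ i, -(1/2 : ℝ) < x i ∧ x i < 1/2}

/-- The dilate `φ_t(y) = t^{-n} φ(y/t)` convolved with `f` at `x`:
`(φ_t ∗ f)(x) = ∫ t^{-n} φ((x-y)/t) f(y) dy`. -/
def phiConv (n : ℕ) (φ f : En n → ℝ) (t : ℝ) (x : En n) : ℝ :=
  ∫ y, (t ^ n)⁻¹ * φ (t⁻¹ • (x - y)) * f y

/-- The maximal function `𝓜_φ f(x) = sup_{t>0} |(φ_t ∗ f)(x)|`. -/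
def Mphi (n : ℕ) (φ f : En n → ℝ) (x : En n) : ℝ :=
  ⨆ t : {t : ℝ // 0 < t}, |phiConv n φ f t.1 x|

/-- A smooth function supported in the closed unit ball with integral `1`. -/
def IsTestFun (n : ℕ) (φ : En n → ℝ) : Prop :=
  ContDiff ℝ (⊤ : ℕ∞) φ ∧ (∀ x, x ∉ Metric.closedBall (0 : En n) 1 → φ x = 0) ∧ (∫ x, φ x) = 1

/-- Membership in the Hardy space `H^1(ℝ^n)`: the maximal function `𝓜_φ f` is
integrable for every admissible `φ`. -/
def MemH1 (n : ℕ) (f : En n → ℝ) : Prop :=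
  ∀ φ : En n → ℝ, IsTestFun n φ → Integrable (Mphi n φ f)

/-- The cube `Q_k = k + Q` for `k ∈ ℤ^n`. -/
def Qk (n : ℕ) (k : Fin n → ℤ) : Set (En n) :=
  {x | ∀ i, (k i : ℝ) - 1/2 < x i ∧ x i < (k i : ℝ) + 1/2}

/-- The lattice point `k ∈ ℤ^n` viewed as a point of `ℝ^n`. -/
def zv (n : ℕ) (k : Fin n → ℤ) : En n :=
  (EuclideanSpace.equiv (Fin n) ℝ).symm (fun i => (k i : ℝ))

/-- `μ_k = ‖f_k‖_{L^1} = ∫_{Q_k} |f|`. -/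
def muk (n : ℕ) (f : En n → ℝ) (k : Fin n → ℤ) : ℝ := ∫ x in Qk n k, |f x|

/-- The local Hardy–Littlewood maximal function
`M^loc f(x) = sup_{0<r<1} r^{-n} ∫_{|y-x|<r} |f(y)| dy`. -/
def Mloc (n : ℕ) (f : En n → ℝ) (x : En n) : ℝ :=
  ⨆ r : Set.Ioo (0 : ℝ) 1, ((r : ℝ) ^ n)⁻¹ * ∫ y in Metric.ball x (r : ℝ), |f y|

/-!
Write `R` for the distance between the two pieces of the support of `a`. At scale `t ≤ 1` the mean
`φ_t ∗ a` is bounded because `a` is; at scale `t ≥ 1` it is `O(t⁻ⁿ)` because `a` is integrable, and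
also `O(R t⁻ⁿ⁻¹)`, because `∫ a = 0` allows replacing `φ((x-y)/t)` by `φ((x-y)/t) - φ(x/t)`.
Moreover `φ_t ∗ a` vanishes at points farther than `t` from the support. So, with
`s = 1 + dist(x, supp a)`, `𝓜_φ a(x)` is `O(s⁻ⁿ min(1, R/s))`, and in polar coordinates the integral
of this majorant becomes `∫_1^R ds/s + ∫_R^∞ R ds/s² = ln R + 1`.
-/

/-- The majorant `s⁻ⁿ min(1, R/s)` of `φ_t ∗ a` at distance about `s` from the support of an
atom `a` of diameter about `R`. -/
def logDecay (n : ℕ) (R s : ℝ) : ℝ := (s ^ n)⁻¹ * min 1 (R / s)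

section LogDecay

variable {n : ℕ} {R s t K : ℝ}

lemma logDecay_nonneg (hR : 0 ≤ R) (hs : 0 ≤ s) : 0 ≤ logDecay n R s := by
  unfold logDecay; positivity

lemma logDecay_of_le (hs : 0 < s) (hsR : s ≤ R) : logDecay n R s = (s ^ n)⁻¹ := by
  rw [logDecay, min_eq_left ((one_le_div hs).2 hsR), mul_one]

lemma logDecay_of_ge (hs : 0 < s) (hRs : R ≤ s) : logDecay n R s = R * (s ^ (n + 1))⁻¹ := by
  rw [logDecay, min_eq_right ((div_le_one hs).2 hRs)]
  field_simp
  ring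

lemma measurable_logDecay : Measurable (logDecay n R) := by
  unfold logDecay; fun_prop

lemma logDecay_le_of_le_mul (hR : 0 ≤ R) (hK : 1 ≤ K) (hs : 0 < s) (ht : 0 < t)
    (hst : s ≤ K * t) : logDecay n R t ≤ K ^ (n + 1) * logDecay n R s := by
  have hinv : t⁻¹ ≤ K * s⁻¹ := by
    rwa [← div_eq_mul_inv, inv_le_iff_one_le_mul₀ ht, div_mul_eq_mul_div, one_le_div hs]
  have hpow : (t ^ n)⁻¹ ≤ K ^ n * (s ^ n)⁻¹ := by
    rw [← inv_pow, ← inv_pow, ← mul_pow]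
    gcongr
  have hmin : min 1 (R / t) ≤ K * min 1 (R / s) := by
    rw [mul_min_of_nonneg _ _ (by positivity), mul_one]
    refine min_le_min hK ?_
    calc R / t = R * t⁻¹ := div_eq_mul_inv R t
      _ ≤ R * (K * s⁻¹) := by gcongr
      _ = K * (R / s) := by ring
  calc logDecay n R t ≤ (K ^ n * (s ^ n)⁻¹) * (K * min 1 (R / s)) := by
        unfold logDecay; gcongr
    _ = K ^ (n + 1) * logDecay n R s := by unfold logDecay; ring

lemma integrableOn_logDecay_one_Ioc (R : ℝ) : IntegrableOn (logDecay 1 R) (Ioc 1 R) := by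
  have hinv : IntegrableOn (fun s : ℝ => s⁻¹) (Ioc 1 R) := by
    refine (ContinuousOn.integrableOn_Icc ?_).mono_set Ioc_subset_Icc_self
    exact continuousOn_inv₀.mono fun s hs => (zero_lt_one.trans_le hs.1).ne'
  refine hinv.congr_fun (fun s hs => ?_) measurableSet_Ioc
  rw [logDecay_of_le (zero_lt_one.trans hs.1) hs.2, pow_one]

lemma logDecay_one_eq_rpow (hR : 0 < R) (hs : s ∈ Ioi R) :
    logDecay 1 R s = R * s ^ (-2 : ℝ) := by
  have hs0 : 0 < s := hR.trans hs
  rw [logDecay_of_ge hs0 hs.le, Real.rpow_neg hs0.le, Real.rpow_two]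

lemma integrableOn_logDecay_one_Ioi_self (hR : 0 < R) : IntegrableOn (logDecay 1 R) (Ioi R) :=
  have hpow : IntegrableOn (fun s : ℝ => s ^ (-2 : ℝ)) (Ioi R) :=
    integrableOn_Ioi_rpow_of_lt (by norm_num) hR
  (integrableOn_congr_fun (fun _ hs => logDecay_one_eq_rpow hR hs) measurableSet_Ioi).2
    (hpow.const_mul R)

lemma integrableOn_logDecay_one_Ioi_one (hR : 1 ≤ R) :
    IntegrableOn (logDecay 1 R) (Ioi 1) := by
  rw [← Ioc_union_Ioi_eq_Ioi hR]
  exact (integrableOn_logDecay_one_Ioc R).union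
    (integrableOn_logDecay_one_Ioi_self (zero_lt_one.trans_le hR))

lemma integral_logDecay_one_Ioi_one (hR : 1 ≤ R) :
    ∫ s in Ioi 1, logDecay 1 R s = 1 + Real.log R := by
  have hR0 : 0 < R := zero_lt_one.trans_le hR
  have hnear : ∫ s in Ioc 1 R, logDecay 1 R s = Real.log R := by
    calc ∫ s in Ioc 1 R, logDecay 1 R s = ∫ s in Ioc 1 R, s⁻¹ :=
          setIntegral_congr_fun measurableSet_Ioc fun s hs => by
            simp only [logDecay_of_le (zero_lt_one.trans hs.1) hs.2, pow_one]
      _ = Real.log R := by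
          rw [← intervalIntegral.integral_of_le hR, integral_inv_of_pos one_pos hR0, div_one]
  have hfar : ∫ s in Ioi R, logDecay 1 R s = 1 := by
    calc ∫ s in Ioi R, logDecay 1 R s = ∫ s in Ioi R, R * s ^ (-2 : ℝ) :=
          setIntegral_congr_fun measurableSet_Ioi fun s hs => logDecay_one_eq_rpow hR0 hs
      _ = R * R⁻¹ := by
          rw [integral_const_mul, integral_Ioi_rpow_of_lt (by norm_num) hR0]
          norm_num [Real.rpow_neg_one]
      _ = 1 := mul_inv_cancel₀ hR0.ne'
  rw [← Ioc_union_Ioi_eq_Ioi hR, setIntegral_union (Ioc_disjoint_Ioi le_rfl) measurableSet_Ioi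
    (integrableOn_logDecay_one_Ioc R) (integrableOn_logDecay_one_Ioi_self hR0), hnear, hfar,
    add_comm]

lemma integrableOn_logDecay_one_one_add (hR : 1 ≤ R) :
    IntegrableOn (fun y => logDecay 1 R (1 + y)) (Ioi 0) := by
  have h := ((measurePreserving_add_left volume (1 : ℝ)).integrableOn_comp_preimage
    (measurableEmbedding_addLeft 1)).2 (integrableOn_logDecay_one_Ioi_one hR)
  simpa [Function.comp_def] using h

lemma integral_logDecay_one_one_add (hR : 1 ≤ R) :
    ∫ y in Ioi 0, logDecay 1 R (1 + y) = 1 + Real.log R := by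
  have h := (measurePreserving_add_left volume (1 : ℝ)).setIntegral_preimage_emb
    (measurableEmbedding_addLeft 1) (logDecay 1 R) (Ioi 1)
  simpa [integral_logDecay_one_Ioi_one hR] using h

lemma pow_pred_mul_logDecay_le (hn : 1 ≤ n) (hR : 0 ≤ R) (hs : 0 ≤ s) :
    s ^ (n - 1) * logDecay n R (1 + s) ≤ logDecay 1 R (1 + s) := by
  obtain ⟨m, rfl⟩ := Nat.exists_eq_add_of_le' hn
  have h1s : 0 < 1 + s := by linarith
  calc s ^ m * logDecay (m + 1) R (1 + s)
      ≤ (1 + s) ^ m * logDecay (m + 1) R (1 + s) :=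
        mul_le_mul_of_nonneg_right (pow_le_pow_left₀ hs (by linarith) m)
          (logDecay_nonneg hR h1s.le)
    _ = logDecay 1 R (1 + s) := by
        unfold logDecay; field_simp; ring

lemma integrableOn_pow_mul_logDecay (hn : 1 ≤ n) (hR : 1 ≤ R) :
    IntegrableOn (fun y => y ^ (n - 1) * logDecay n R (1 + y)) (Ioi 0) := by
  have hR0 : 0 ≤ R := zero_le_one.trans hR
  have hmeas : Measurable fun y => y ^ (n - 1) * logDecay n R (1 + y) :=
    (measurable_id.pow_const _).mul (measurable_logDecay.comp (measurable_const_add 1))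
  refine (integrableOn_logDecay_one_one_add hR).mono' hmeas.aestronglyMeasurable
    (ae_restrict_of_forall_mem measurableSet_Ioi fun y (hy : 0 < y) => ?_)
  rw [Real.norm_of_nonneg (mul_nonneg (by positivity) (logDecay_nonneg hR0 (by positivity)))]
  exact pow_pred_mul_logDecay_le hn hR0 hy.le

variable {E : Type*} [NormedAddCommGroup E] [NormedSpace ℝ E] [FiniteDimensional ℝ E]
  [Nontrivial E] [MeasurableSpace E] [BorelSpace E] (μ : Measure E) [μ.IsAddHaarMeasure]

lemma integrable_logDecay_one_add_norm (hR : 1 ≤ R) :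
    Integrable (fun x => logDecay (Module.finrank ℝ E) R (1 + ‖x‖)) μ :=
  (integrable_fun_norm_addHaar μ (f := fun y => logDecay (Module.finrank ℝ E) R (1 + y))).2
    (integrableOn_pow_mul_logDecay Module.finrank_pos hR)

lemma integral_logDecay_one_add_norm_le (hR : 1 ≤ R) :
    ∫ x, logDecay (Module.finrank ℝ E) R (1 + ‖x‖) ∂μ ≤
      Module.finrank ℝ E * μ.real (ball 0 1) * (1 + Real.log R) := by
  have hdim : 1 ≤ Module.finrank ℝ E := Module.finrank_pos
  rw [integral_fun_norm_addHaar μ fun y => logDecay (Module.finrank ℝ E) R (1 + y),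
    ← integral_logDecay_one_one_add hR, mul_assoc]
  simp only [nsmul_eq_mul, smul_eq_mul]
  refine mul_le_mul_of_nonneg_left (mul_le_mul_of_nonneg_left ?_ measureReal_nonneg) (by positivity)
  exact setIntegral_mono_on (integrableOn_pow_mul_logDecay hdim hR)
    (integrableOn_logDecay_one_one_add hR) measurableSet_Ioi
    fun y hy => pow_pred_mul_logDecay_le hdim (zero_le_one.trans hR) (le_of_lt hy)

end LogDecay

section Convolution

variable {n : ℕ} {φ a : En n → ℝ} {t M : ℝ} {x : En n}

lemma abs_phiConv_le_integral_abs_mul (ht : 0 < t) (hφ : Integrable φ)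
    (ha : ∀ᵐ y, |a y| ≤ M) : |phiConv n φ a t x| ≤ (∫ y, |φ y|) * M := by
  have hint : Integrable fun y => (t ^ n)⁻¹ * |φ (t⁻¹ • (x - y))| * M :=
    (((hφ.comp_smul (inv_ne_zero ht.ne')).abs.comp_sub_left x).const_mul _).mul_const M
  have hscale : ∫ y, (t ^ n)⁻¹ * |φ (t⁻¹ • (x - y))| = ∫ y, |φ y| := by
    rw [integral_const_mul, integral_sub_left_eq_self (fun y => |φ (t⁻¹ • y)|) volume x,
      Measure.integral_comp_inv_smul_of_nonneg volume (fun y => |φ y|) ht.le,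
      finrank_euclideanSpace_fin, smul_eq_mul, inv_mul_cancel_left₀ (by positivity)]
  rw [phiConv, ← Real.norm_eq_abs, ← hscale, ← integral_mul_const]
  refine norm_integral_le_of_norm_le hint ?_
  filter_upwards [ha] with y hy
  rw [norm_mul, norm_mul, Real.norm_of_nonneg (by positivity), Real.norm_eq_abs, Real.norm_eq_abs]
  gcongr

lemma abs_phiConv_le_of_support (ht : 0 ≤ t) (ha : Integrable a)
    (hφ : ∀ y ∈ Function.support a, |φ (t⁻¹ • (x - y))| ≤ M) :
    |phiConv n φ a t x| ≤ (t ^ n)⁻¹ * M * ∫ y, |a y| := by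
  rw [phiConv, ← Real.norm_eq_abs, ← integral_const_mul]
  refine norm_integral_le_of_norm_le (ha.abs.const_mul _) (.of_forall fun y => ?_)
  rw [norm_mul, norm_mul, Real.norm_of_nonneg (by positivity), Real.norm_eq_abs, Real.norm_eq_abs]
  by_cases hy : a y = 0
  · simp [hy]
  · gcongr
    exact hφ y hy

lemma phiConv_sub_const (hφ : Continuous φ) (hM : ∀ y, |φ y| ≤ M) (ha : Integrable a)
    (ha0 : ∫ y, a y = 0) (c : ℝ) :
    phiConv n (fun y => φ y - c) a t x = phiConv n φ a t x := by
  have hint : Integrable fun y => φ (t⁻¹ • (x - y)) * a y :=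
    ha.bdd_mul (by fun_prop) (.of_forall fun y => hM (t⁻¹ • (x - y)))
  unfold phiConv
  simp only [mul_assoc, sub_mul, integral_const_mul]
  rw [integral_sub hint (ha.const_mul c), integral_const_mul, ha0, mul_zero, sub_zero]

lemma abs_phiConv_le_of_lipschitzWith {L : NNReal} {ρ : ℝ} (ht : 0 ≤ t)
    (hL : LipschitzWith L φ) (hM : ∀ y, |φ y| ≤ M) (ha : Integrable a) (ha0 : ∫ y, a y = 0)
    (hsupp : Function.support a ⊆ closedBall 0 ρ) :
    |phiConv n φ a t x| ≤ (t ^ n)⁻¹ * (L * (ρ / t)) * ∫ y, |a y| := by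
  rw [← phiConv_sub_const hL.continuous hM ha ha0 (φ (t⁻¹ • x))]
  refine abs_phiConv_le_of_support ht ha fun y hy => ?_
  have hy' : ‖y‖ ≤ ρ := mem_closedBall_zero_iff.1 (hsupp hy)
  calc |φ (t⁻¹ • (x - y)) - φ (t⁻¹ • x)| ≤ L * ‖t⁻¹ • (x - y) - t⁻¹ • x‖ :=
        hL.norm_sub_le _ _
    _ = L * (‖y‖ / t) := by
        rw [← smul_sub, sub_sub_cancel_left, norm_smul, norm_neg, norm_inv,
          Real.norm_of_nonneg ht, inv_mul_eq_div]
    _ ≤ L * (ρ / t) := by gcongr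

lemma exists_norm_sub_le_of_phiConv_ne_zero (ht : 0 < t) (hφ : ∀ y ∉ closedBall 0 1, φ y = 0)
    (h : phiConv n φ a t x ≠ 0) : ∃ y ∈ Function.support a, ‖x - y‖ ≤ t := by
  obtain ⟨y, hy⟩ : ∃ y, (t ^ n)⁻¹ * φ (t⁻¹ • (x - y)) * a y ≠ 0 := by
    by_contra! hzero
    exact h (by simp [phiConv, hzero])
  refine ⟨y, right_ne_zero_of_mul hy, ?_⟩
  have hmem : t⁻¹ • (x - y) ∈ closedBall 0 1 := by
    by_contra hnot
    exact right_ne_zero_of_mul (left_ne_zero_of_mul hy) (hφ _ hnot)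
  rwa [mem_closedBall_zero_iff, norm_smul, norm_inv, Real.norm_of_nonneg ht.le, inv_mul_le_iff₀ ht,
    mul_one] at hmem

end Convolution

/-- A mean-zero function bounded by `1` and supported in the two balls of radius `r` centred at `0`
and `z`: an atom on the pair of cubes `Q_0`, `Q_j`, with the cubes replaced by balls. -/
structure IsTwoBallAtom {n : ℕ} (r : ℝ) (z : En n) (a : En n → ℝ) : Prop where
  aestronglyMeasurable : AEStronglyMeasurable a
  abs_le_one : ∀ᵐ y, |a y| ≤ 1
  integral_eq_zero : ∫ y, a y = 0
  support_subset : Function.support a ⊆ closedBall 0 r ∪ closedBall z r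

namespace IsTwoBallAtom

variable {n : ℕ} {r : ℝ} {z : En n} {a : En n → ℝ}

lemma integrable (h : IsTwoBallAtom r z a) : Integrable a := by
  rw [← integrableOn_iff_integrable_of_support_subset h.support_subset]
  exact Measure.integrableOn_of_bounded
    (measure_union_lt_top measure_closedBall_lt_top measure_closedBall_lt_top).ne
    h.aestronglyMeasurable (ae_restrict_of_ae h.abs_le_one)

lemma integral_abs_le (h : IsTwoBallAtom r z a) :
    ∫ y, |a y| ≤ 2 * volume.real (closedBall (0 : En n) r) := by
  set S : Set (En n) := closedBall 0 r ∪ closedBall z r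
  have hS : volume S < ∞ :=
    measure_union_lt_top measure_closedBall_lt_top measure_closedBall_lt_top
  have hzero : ∀ y ∉ S, |a y| = 0 := fun y hy => by
    simpa using fun hay => hy (h.support_subset hay)
  calc ∫ y, |a y| = ∫ y in S, |a y| := (setIntegral_eq_integral_of_forall_compl_eq_zero hzero).symm
    _ ≤ 1 * volume.real S :=
        (le_abs_self _).trans <| norm_setIntegral_le_of_norm_le_const_ae (C := 1) hS <|
          ae_restrict_of_ae <| h.abs_le_one.mono fun y hy => by rwa [Real.norm_eq_abs, abs_abs]
    _ ≤ volume.real (closedBall (0 : En n) r) + volume.real (closedBall z r) := by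
        rw [one_mul]
        exact measureReal_union_le _ _
    _ = 2 * volume.real (closedBall (0 : En n) r) := by
        rw [Measure.addHaar_real_closedBall_center volume z, two_mul]

lemma support_subset_closedBall (h : IsTwoBallAtom r z a) :
    Function.support a ⊆ closedBall 0 (r + ‖z‖) := by
  refine h.support_subset.trans (union_subset (closedBall_subset_closedBall ?_) ?_)
  · linarith [norm_nonneg z]
  · exact closedBall_subset_closedBall' (by rw [dist_zero_right])

end IsTwoBallAtom

section TwoBallAtom

variable {n : ℕ} {φ : En n → ℝ} {L : NNReal} {r : ℝ}

lemma IsTwoBallAtom.abs_phiConv_le {a : En n → ℝ} {z x : En n} {t M : ℝ}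
    (ha : IsTwoBallAtom r z a) (hL : LipschitzWith L φ) (hM : ∀ y, |φ y| ≤ M) (hr : 0 ≤ r)
    (hz : 1 ≤ ‖z‖) (ht : 0 ≤ t) :
    |phiConv n φ a t x| ≤
      max M (L * (r + 1)) * (2 * volume.real (closedBall (0 : En n) r)) * logDecay n ‖z‖ t := by
  set N := max M (L * (r + 1))
  have hN : 0 ≤ N := ((abs_nonneg _).trans (hM 0)).trans (le_max_left _ _)
  have hbdd := abs_phiConv_le_of_support (x := x) ht ha.integrable fun _ _ => hM _
  have hcancel := abs_phiConv_le_of_lipschitzWith (x := x) ht hL hM ha.integrable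
    ha.integral_eq_zero ha.support_subset_closedBall
  have hmin : min M (L * ((r + ‖z‖) / t)) ≤ N * min 1 (‖z‖ / t) := by
    rw [mul_min_of_nonneg _ _ hN, mul_one]
    refine min_le_min (le_max_left _ _) ?_
    calc L * ((r + ‖z‖) / t) ≤ L * (((r + 1) * ‖z‖) / t) := by gcongr; nlinarith
      _ = L * (r + 1) * (‖z‖ / t) := by ring
      _ ≤ N * (‖z‖ / t) := by gcongr; exact le_max_right _ _
  calc |phiConv n φ a t x|
      ≤ (t ^ n)⁻¹ * min M (L * ((r + ‖z‖) / t)) * ∫ y, |a y| := by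
        rw [mul_min_of_nonneg _ _ (by positivity),
          min_mul_of_nonneg _ _ (integral_nonneg fun _ => abs_nonneg _)]
        exact le_min hbdd hcancel
    _ ≤ (t ^ n)⁻¹ * (N * min 1 (‖z‖ / t)) *
          (2 * volume.real (closedBall (0 : En n) r)) := by
        gcongr
        exact ha.integral_abs_le
    _ = N * (2 * volume.real (closedBall (0 : En n) r)) * logDecay n ‖z‖ t := by
        unfold logDecay; ring

lemma exists_abs_phiConv_le_logDecay (hL : LipschitzWith L φ)
    (hφ : ∀ x ∉ closedBall 0 1, φ x = 0) (hr : 0 ≤ r) :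
    ∃ B, 0 ≤ B ∧ ∀ z : En n, 1 ≤ ‖z‖ → ∀ a, IsTwoBallAtom r z a → ∀ t, 0 < t → ∀ x,
      |phiConv n φ a t x| ≤ B * logDecay n ‖z‖ (max t 1) := by
  have hcs : HasCompactSupport φ := .intro (isCompact_closedBall 0 1) hφ
  obtain ⟨M, hM⟩ := hcs.exists_bound_of_continuous hL.continuous
  set A := ∫ y, |φ y|
  set B := max M (L * (r + 1)) * (2 * volume.real (closedBall (0 : En n) r))
  have hA : 0 ≤ A := integral_nonneg fun _ => abs_nonneg _
  refine ⟨max A B, le_max_of_le_left hA, fun z hz a ha t ht x => ?_⟩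
  rcases le_total t 1 with ht1 | ht1
  · rw [max_eq_right ht1, logDecay_of_le one_pos hz, one_pow, inv_one]
    refine le_trans ?_ (mul_le_mul_of_nonneg_right (le_max_left A B) zero_le_one)
    exact abs_phiConv_le_integral_abs_mul ht
      (hL.continuous.integrable_of_hasCompactSupport hcs) ha.abs_le_one
  · rw [max_eq_left ht1]
    exact (ha.abs_phiConv_le hL hM hr hz ht.le).trans <|
      mul_le_mul_of_nonneg_right (le_max_right A B) (logDecay_nonneg (norm_nonneg z) ht.le)

lemma exists_Mphi_le_logDecay (hL : LipschitzWith L φ)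
    (hφ : ∀ x ∉ closedBall 0 1, φ x = 0) (hr : 0 ≤ r) :
    ∃ B, 0 ≤ B ∧ ∀ z : En n, 1 ≤ ‖z‖ → ∀ a, IsTwoBallAtom r z a → ∀ x,
      Mphi n φ a x ≤ B * (logDecay n ‖z‖ (1 + ‖x‖) + logDecay n ‖z‖ (1 + ‖x - z‖)) := by
  obtain ⟨B, hB, hconv⟩ := exists_abs_phiConv_le_logDecay hL hφ hr
  refine ⟨B * (r + 2) ^ (n + 1), by positivity, fun z hz a ha x => ?_⟩
  have hdecay : ∀ w : En n, 0 ≤ logDecay n ‖z‖ (1 + ‖w‖) := fun w =>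
    logDecay_nonneg (norm_nonneg z) (by positivity)
  have hnonneg := mul_nonneg (mul_nonneg hB (by positivity : 0 ≤ (r + 2) ^ (n + 1)))
    (add_nonneg (hdecay x) (hdecay (x - z)))
  refine Real.iSup_le (fun ⟨t, ht⟩ => ?_) hnonneg
  have hnear : ∀ c y : En n, ‖x - y‖ ≤ t → y ∈ closedBall c r →
      |phiConv n φ a t x| ≤ B * (r + 2) ^ (n + 1) * logDecay n ‖z‖ (1 + ‖x - c‖) := by
    intro c y hxy hy
    have hxc : 1 + ‖x - c‖ ≤ (r + 2) * max t 1 := by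
      have := norm_sub_le_norm_sub_add_norm_sub x y c
      have := mem_closedBall_iff_norm.1 hy
      nlinarith [le_max_left t 1, le_max_right t 1]
    rw [mul_assoc]
    exact (hconv z hz a ha t ht x).trans <| mul_le_mul_of_nonneg_left
      (logDecay_le_of_le_mul (norm_nonneg z) (by linarith) (by positivity) (by positivity) hxc) hB
  by_cases h0 : phiConv n φ a t x = 0
  · rwa [h0, abs_zero]
  obtain ⟨y, hy, hxy⟩ := exists_norm_sub_le_of_phiConv_ne_zero ht hφ h0
  rcases ha.support_subset hy with hy | hy
  · refine (hnear 0 y hxy hy).trans ?_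
    rw [sub_zero]
    gcongr
    exact le_add_of_nonneg_right (hdecay _)
  · refine (hnear z y hxy hy).trans ?_
    gcongr
    exact le_add_of_nonneg_left (hdecay _)

theorem far_atom_estimate_general (hL : LipschitzWith L φ)
    (hφ : ∀ x ∉ closedBall 0 1, φ x = 0) (hr : 0 ≤ r) :
    ∃ C : ℝ, ∀ z : En n, 1 ≤ ‖z‖ → ∀ a, IsTwoBallAtom r z a →
      ∫⁻ x, ENNReal.ofReal (Mphi n φ a x) ≤ ENNReal.ofReal (C * (1 + Real.log ‖z‖)) := by
  obtain ⟨B, hB, hM⟩ := exists_Mphi_le_logDecay hL hφ hr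
  refine ⟨B * (2 * (n * volume.real (ball (0 : En n) 1))), fun z hz a ha => ?_⟩
  have : Nontrivial (En n) := ⟨z, 0, norm_pos_iff.1 (zero_lt_one.trans_le hz)⟩
  set g : En n → ℝ := fun x => logDecay n ‖z‖ (1 + ‖x‖)
  have hg : Integrable g := by
    simpa using integrable_logDecay_one_add_norm (volume : Measure (En n)) hz
  have hgle : ∫ x, g x ≤ n * volume.real (ball (0 : En n) 1) * (1 + Real.log ‖z‖) := by
    simpa using integral_logDecay_one_add_norm_le (volume : Measure (En n)) hz
  have hgz : Integrable fun x => g (x - z) := hg.comp_sub_right z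
  have hg0 : ∀ x, 0 ≤ g x := fun x => logDecay_nonneg (norm_nonneg z) (by positivity)
  calc ∫⁻ x, ENNReal.ofReal (Mphi n φ a x)
      ≤ ∫⁻ x, ENNReal.ofReal (B * (g x + g (x - z))) :=
        lintegral_mono fun x => ENNReal.ofReal_le_ofReal (hM z hz a ha x)
    _ = ENNReal.ofReal (∫ x, B * (g x + g (x - z))) :=
        (ofReal_integral_eq_lintegral_ofReal ((hg.add hgz).const_mul B) (.of_forall fun x =>
          mul_nonneg hB (add_nonneg (hg0 _) (hg0 _)))).symm
    _ = ENNReal.ofReal (B * (2 * ∫ x, g x)) := by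
        rw [integral_const_mul, integral_add hg hgz, integral_sub_right_eq_self g z, two_mul]
    _ ≤ ENNReal.ofReal
          (B * (2 * (n * volume.real (ball (0 : En n) 1))) * (1 + Real.log ‖z‖)) := by
        rw [mul_assoc B, mul_assoc 2]
        gcongr

end TwoBallAtom

lemma IsTestFun.exists_lipschitzWith {n : ℕ} {φ : En n → ℝ} (hφ : IsTestFun n φ) :
    ∃ L, LipschitzWith L φ :=
  ContDiff.lipschitzWith_of_hasCompactSupport (.intro (isCompact_closedBall 0 1) hφ.2.1) hφ.1
    (by simp)

lemma Qk_subset_closedBall (n : ℕ) (k : Fin n → ℤ) : Qk n k ⊆ closedBall (zv n k) √n := by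
  intro y hy
  have hcoord : ∀ i ∈ Finset.univ, ‖(y - zv n k) i‖ ^ 2 ≤ (1 : ℝ) := fun i _ => by
    have hzv : (y - zv n k) i = y i - k i := by simp [zv]
    rw [hzv, Real.norm_eq_abs, sq_abs]
    nlinarith [hy i]
  rw [mem_closedBall_iff_norm, EuclideanSpace.norm_eq]
  exact Real.sqrt_le_sqrt (by simpa using Finset.sum_le_sum hcoord)

lemma isTwoBallAtom_of_Qk {n : ℕ} {j : Fin n → ℤ} {a : En n → ℝ} (ha : Measurable a)
    (ha1 : ∀ᵐ x, |a x| ≤ 1) (ha0 : ∫ x, a x = 0) (hsupp : ∀ x, x ∉ Qk n 0 ∪ Qk n j → a x = 0) :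
    IsTwoBallAtom √n (zv n j) a where
  aestronglyMeasurable := ha.aestronglyMeasurable
  abs_le_one := ha1
  integral_eq_zero := ha0
  support_subset := by
    have hzv : zv n 0 = 0 := by ext; simp [zv]
    refine Subset.trans (fun x hx => ?_)
      (union_subset_union (hzv ▸ Qk_subset_closedBall n 0) (Qk_subset_closedBall n j))
    exact by_contra fun hnot => hx (hsupp x hnot)

/-- **Lemma (atoms at distance `|j|`).**
For a fixed admissible `φ` there is `C = C(n,φ)` such that: for every `j ∈ ℤ^n`
with `|j| > 2` and every measurable `a` with `|a| ≤ 1` a.e., `∫ a = 0`, supported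
in `Q_0 ∪ Q_j`, one has `‖𝓜_φ a‖_{L^1} ≤ C (1 + ln|j|)`. -/
theorem far_atom_estimate (n : ℕ) (hn : 1 ≤ n) (φ : En n → ℝ) (hφ : IsTestFun n φ) :
    ∃ C : ℝ, ∀ j : Fin n → ℤ, 2 < ‖zv n j‖ →
      ∀ a : En n → ℝ, Measurable a →
        (∀ᵐ x ∂(volume : Measure (En n)), |a x| ≤ 1) →
        (∫ x, a x) = 0 →
        (∀ x, x ∉ Qk n 0 ∪ Qk n j → a x = 0) →
        ∫⁻ x, ENNReal.ofReal (Mphi n φ a x) ≤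
          ENNReal.ofReal (C * (1 + Real.log ‖zv n j‖)) := by
  obtain ⟨L, hL⟩ := hφ.exists_lipschitzWith
  obtain ⟨C, hC⟩ := far_atom_estimate_general hL hφ.2.1 (Real.sqrt_nonneg n)
  exact ⟨C, fun j hj a ha ha1 ha0 has =>
    hC (zv n j) (by linarith) a (isTwoBallAtom_of_Qk ha ha1 ha0 has)⟩
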